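/- If two torsion-free affine connections Γ and Γ' on U are projectively equivalent, then for every nonvanishing smooth 1-form ω on U with ω ∧ dω = 0, the codimension-one foliation defined by ω is totally geodesic for Γ if and only if it is totally geodesic for Γ'. Moreover, if Γ'ᵏᵢⱼ = Γᵏᵢⱼ + δᵏᵢρⱼ + δᵏⱼρᵢ, then d^s_{Γ'} ω = d^s_Γ ω − 2ρ·ω for every smooth 1-form ω. -/

import Mathlib

open scoped BigOperators

/-- Partial derivative in the `i`-th coordinate direction. -/
noncomputable def pd {n : ℕ} (i : Fin n) (f : (Fin n → ℝ) → ℝ) (x : Fin n → ℝ) : ℝ :=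
  fderiv ℝ f x (Pi.single i 1)

/-- A torsion-free affine connection on `U`, given by its Christoffel symbols `Γ k i j`
(smooth on `U` and symmetric in the lower indices `i j`). -/
def IsTorsionFreeConn {n : ℕ} (U : Set (Fin n → ℝ))
    (Γ : Fin n → Fin n → Fin n → (Fin n → ℝ) → ℝ) : Prop :=
  (∀ k i j, ContDiffOn ℝ (⊤ : ℕ∞) (Γ k i j) U) ∧ (∀ k i j x, Γ k i j x = Γ k j i x)

/-- `γ` is a geodesic of `Γ` on the set `I ⊆ ℝ`, with image in `U`. -/
def IsGeodesicOn {n : ℕ} (U : Set (Fin n → ℝ))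
    (Γ : Fin n → Fin n → Fin n → (Fin n → ℝ) → ℝ)
    (I : Set ℝ) (γ : ℝ → Fin n → ℝ) : Prop :=
  (∀ t ∈ I, γ t ∈ U) ∧ ContDiffOn ℝ 2 γ I ∧
    ∀ t ∈ I, ∀ k, deriv (fun s => deriv (fun u => γ u k) s) t +
      ∑ i, ∑ j, Γ k i j (γ t) * deriv (fun u => γ u i) t * deriv (fun u => γ u j) t = 0

/-- The codimension-one foliation defined by the `1`-form `ω` is totally geodesic for `Γ`:
every geodesic tangent to a leaf at time `0` stays tangent to the kernel of `ω`. -/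
def TotallyGeodesic {n : ℕ} (U : Set (Fin n → ℝ))
    (Γ : Fin n → Fin n → Fin n → (Fin n → ℝ) → ℝ)
    (ω : (Fin n → ℝ) → Fin n → ℝ) : Prop :=
  ∀ I : Set ℝ, IsOpen I → I.OrdConnected → (0 : ℝ) ∈ I →
    ∀ γ : ℝ → Fin n → ℝ, IsGeodesicOn U Γ I γ →
      (∑ k, ω (γ 0) k * deriv (fun u => γ u k) 0) = 0 →
      ∀ t ∈ I, (∑ k, ω (γ t) k * deriv (fun u => γ u k) t) = 0

/-- `ω` is a smooth nonvanishing `1`-form on `U` satisfying the integrability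
condition `ω ∧ dω = 0`. -/
def IsFoliationForm {n : ℕ} (U : Set (Fin n → ℝ)) (ω : (Fin n → ℝ) → Fin n → ℝ) : Prop :=
  ContDiffOn ℝ (⊤ : ℕ∞) ω U ∧ (∀ x ∈ U, ω x ≠ 0) ∧
    ∀ x ∈ U, ∀ i j k,
      ω x i * (pd j (fun y => ω y k) x - pd k (fun y => ω y j) x) +
      ω x j * (pd k (fun y => ω y i) x - pd i (fun y => ω y k) x) +
      ω x k * (pd i (fun y => ω y j) x - pd j (fun y => ω y i) x) = 0

/-- Components of the symmetric covariant differential `d^s_Γ ω`. -/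
noncomputable def dsym {n : ℕ} (Γ : Fin n → Fin n → Fin n → (Fin n → ℝ) → ℝ)
    (ω : (Fin n → ℝ) → Fin n → ℝ) (i j : Fin n) (x : Fin n → ℝ) : ℝ :=
  (pd i (fun y => ω y j) x + pd j (fun y => ω y i) x) / 2 - ∑ k, Γ k i j x * ω x k

/-- Components of the symmetric product `θ·ω` of two `1`-forms. -/
noncomputable def symProd {n : ℕ} (θ ω : (Fin n → ℝ) → Fin n → ℝ) (i j : Fin n) (x : Fin n → ℝ) : ℝ :=
  (θ x i * ω x j + θ x j * ω x i) / 2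

/-- A `d`-web of hypersurfaces on `U`: a family of smooth nonvanishing integrable `1`-forms,
any `n` of which are linearly independent at every point of `U`. -/
def IsWeb {n d : ℕ} (U : Set (Fin n → ℝ)) (ωs : Fin d → (Fin n → ℝ) → Fin n → ℝ) : Prop :=
  (∀ i, IsFoliationForm U (ωs i)) ∧
    ∀ x ∈ U, ∀ σ : Fin n → Fin d, Function.Injective σ →
      LinearIndependent ℝ (fun i => ωs (σ i) x)

/-- `Γ` and `Γ'` are projectively equivalent on `U`:
`Γ'ᵏᵢⱼ = Γᵏᵢⱼ + δᵏᵢ ρⱼ + δᵏⱼ ρᵢ` for some smooth `1`-form `ρ`. -/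
def ProjEquiv {n : ℕ} (U : Set (Fin n → ℝ))
    (Γ Γ' : Fin n → Fin n → Fin n → (Fin n → ℝ) → ℝ) : Prop :=
  ∃ ρ : (Fin n → ℝ) → Fin n → ℝ, ContDiffOn ℝ (⊤ : ℕ∞) ρ U ∧
    ∀ x ∈ U, ∀ k i j, Γ' k i j x =
      Γ k i j x + (if k = i then ρ x j else 0) + (if k = j then ρ x i else 0)

/-- `X` is the frame of vector fields dual to the coframe `ωs` on `U`. -/
def IsDualFrame {n : ℕ} (U : Set (Fin n → ℝ)) (ωs : Fin n → (Fin n → ℝ) → Fin n → ℝ)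
    (X : Fin n → (Fin n → ℝ) → Fin n → ℝ) : Prop :=
  (∀ i, ContDiffOn ℝ (⊤ : ℕ∞) (X i) U) ∧
    ∀ x ∈ U, ∀ i j, (∑ k, ωs i x k * X j x k) = if i = j then 1 else 0

/-- The web invariants `s^a_{ij} = (1/(aᵢ−aⱼ))·(aᵢ ∂ⱼ − aⱼ ∂ᵢ) log (aⱼ/aᵢ)`, where `∂ᵢ`
is derivation along the frame vector field `X i`. -/
noncomputable def sInv {n : ℕ} (X : Fin n → (Fin n → ℝ) → Fin n → ℝ)
    (a : Fin n → (Fin n → ℝ) → ℝ) (i j : Fin n) (x : Fin n → ℝ) : ℝ :=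
  (1 / (a i x - a j x)) *
    (a i x * (fderiv ℝ (a j) x (X j x) / a j x - fderiv ℝ (a i) x (X j x) / a i x) -
     a j x * (fderiv ℝ (a j) x (X i x) / a j x - fderiv ℝ (a i) x (X i x) / a i x))

/-- The curvature tensor `Rᵏₗᵢⱼ` of the connection `Γ`. -/
noncomputable def curv {n : ℕ} (Γ : Fin n → Fin n → Fin n → (Fin n → ℝ) → ℝ)
    (k l i j : Fin n) (x : Fin n → ℝ) : ℝ :=
  pd i (Γ k j l) x - pd j (Γ k i l) x +
    ∑ m, (Γ k i m x * Γ m j l x - Γ k j m x * Γ m i l x)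

theorem sum_mul_self_ne_zero {n : ℕ} {a : Fin n → ℝ} (ha : a ≠ 0) : ∑ k, a k * a k ≠ 0 :=
  fun h0 => ha <| funext fun k => by
    simpa using (Finset.sum_eq_zero_iff_of_nonneg fun i _ => mul_self_nonneg (a i)).1 h0 k
      (Finset.mem_univ k)

/-- The covariant derivative `(∇_u ω)(v)` at the point `x`. -/
noncomputable def covDeriv {n : ℕ} (Γ : Fin n → Fin n → Fin n → (Fin n → ℝ) → ℝ)
    (ω : (Fin n → ℝ) → Fin n → ℝ) (x u v : Fin n → ℝ) : ℝ :=
  ∑ k, (fderiv ℝ (fun y => ω y k) x u * v k - ω x k * ∑ i, ∑ j, Γ k i j x * u i * v j)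

section CovDeriv

variable {n : ℕ} (Γ : Fin n → Fin n → Fin n → (Fin n → ℝ) → ℝ)
  (ω : (Fin n → ℝ) → Fin n → ℝ) (x : Fin n → ℝ)

theorem covDeriv_sub_smul_left (u a v : Fin n → ℝ) (c : ℝ) :
    covDeriv Γ ω x (u - c • a) v = covDeriv Γ ω x u v - c * covDeriv Γ ω x a v := by
  unfold covDeriv
  rw [Finset.mul_sum, ← Finset.sum_sub_distrib]
  refine Finset.sum_congr rfl fun k _ => ?_
  have h : ∑ i, ∑ j, Γ k i j x * (u - c • a) i * v j =
      ∑ i, ∑ j, Γ k i j x * u i * v j - c * ∑ i, ∑ j, Γ k i j x * a i * v j := by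
    simp only [Finset.mul_sum, ← Finset.sum_sub_distrib, Pi.sub_apply, Pi.smul_apply, smul_eq_mul]
    exact Finset.sum_congr rfl fun i _ => Finset.sum_congr rfl fun j _ => by ring
  rw [h, map_sub, map_smul, smul_eq_mul]
  ring

theorem covDeriv_sub_smul_right (u v a : Fin n → ℝ) (c : ℝ) :
    covDeriv Γ ω x u (v - c • a) = covDeriv Γ ω x u v - c * covDeriv Γ ω x u a := by
  unfold covDeriv
  rw [Finset.mul_sum, ← Finset.sum_sub_distrib]
  refine Finset.sum_congr rfl fun k _ => ?_
  have h : ∑ i, ∑ j, Γ k i j x * u i * (v - c • a) j =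
      ∑ i, ∑ j, Γ k i j x * u i * v j - c * ∑ i, ∑ j, Γ k i j x * u i * a j := by
    simp only [Finset.mul_sum, ← Finset.sum_sub_distrib, Pi.sub_apply, Pi.smul_apply, smul_eq_mul]
    exact Finset.sum_congr rfl fun i _ => Finset.sum_congr rfl fun j _ => by ring
  rw [h, Pi.sub_apply, Pi.smul_apply, smul_eq_mul]
  ring

variable {Γ ω x}

/-- If the quadratic form `v ↦ (∇_v ω)(v)` vanishes on the kernel of `ω`, it is divisible by `ω`;
the quotient is obtained from the orthogonal splitting along `ω`. -/
theorem covDeriv_self_eq_mul (hω : ω x ≠ 0)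
    (h : ∀ v : Fin n → ℝ, ∑ k, ω x k * v k = 0 → covDeriv Γ ω x v v = 0) (v : Fin n → ℝ) :
    covDeriv Γ ω x v v =
      (covDeriv Γ ω x v (ω x) + covDeriv Γ ω x (ω x) v -
        (∑ k, ω x k * v k) / (∑ k, ω x k * ω x k) * covDeriv Γ ω x (ω x) (ω x)) /
        (∑ k, ω x k * ω x k) * ∑ k, ω x k * v k := by
  have hN : ∑ k, ω x k * ω x k ≠ 0 := sum_mul_self_ne_zero hω
  have hw := h (v - ((∑ k, ω x k * v k) / ∑ k, ω x k * ω x k) • ω x) (by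
    simp only [Pi.sub_apply, Pi.smul_apply, smul_eq_mul, mul_sub, Finset.sum_sub_distrib,
      mul_left_comm _ ((∑ k, ω x k * v k) / ∑ k, ω x k * ω x k), ← Finset.mul_sum]
    rw [div_mul_cancel₀ _ hN, sub_self])
  rw [covDeriv_sub_smul_left, covDeriv_sub_smul_right, covDeriv_sub_smul_right] at hw
  field_simp at hw ⊢
  linear_combination hw

end CovDeriv

/-- On the kernel of `ω` the form `v ↦ (∇_v ω)(v)` is a projective invariant. -/
theorem covDeriv_self_eq_of_proj {n : ℕ} {Γ Γ' : Fin n → Fin n → Fin n → (Fin n → ℝ) → ℝ}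
    {ρ ω : (Fin n → ℝ) → Fin n → ℝ} {x : Fin n → ℝ}
    (h : ∀ k i j, Γ' k i j x =
      Γ k i j x + (if k = i then ρ x j else 0) + (if k = j then ρ x i else 0))
    {v : Fin n → ℝ} (hv : ∑ k, ω x k * v k = 0) :
    covDeriv Γ' ω x v v = covDeriv Γ ω x v v := by
  have hk : ∀ k, ∑ i, ∑ j, Γ' k i j x * v i * v j =
      ∑ i, ∑ j, Γ k i j x * v i * v j + 2 * v k * ∑ j, ρ x j * v j := fun k => by
    simp only [h, add_mul, ite_mul, zero_mul, Finset.sum_add_distrib, Finset.sum_ite_eq,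
      Finset.mem_univ, if_true, Finset.sum_ite_irrel, Finset.sum_const_zero, Finset.mul_sum]
    rw [add_assoc, ← Finset.sum_add_distrib]
    congr 1
    exact Finset.sum_congr rfl fun i _ => by ring
  have : ∑ k, ω x k * (2 * v k * ∑ j, ρ x j * v j) = 0 := by
    calc _ = (∑ k, ω x k * v k) * (2 * ∑ j, ρ x j * v j) := by
          rw [Finset.sum_mul]
          exact Finset.sum_congr rfl fun i _ => by ring
      _ = 0 := by rw [hv, zero_mul]
  unfold covDeriv
  simp only [hk, mul_add, Finset.sum_sub_distrib, Finset.sum_add_distrib, this, add_zero]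

theorem ContDiffOn.coord {n : ℕ} {E : Type*} [NormedAddCommGroup E] [NormedSpace ℝ E]
    {m : WithTop ℕ∞} {s : Set E} {f : E → Fin n → ℝ} (hf : ContDiffOn ℝ m f s) (k : Fin n) :
    ContDiffOn ℝ m (fun y => f y k) s :=
  contDiffOn_pi.1 hf k

/-- Along a geodesic, the derivative of `ω(γ̇)` is `(∇_γ̇ ω)(γ̇)`. -/
theorem IsGeodesicOn.hasDerivAt_form {n : ℕ} {U : Set (Fin n → ℝ)} (hU : IsOpen U)
    {Γ : Fin n → Fin n → Fin n → (Fin n → ℝ) → ℝ} {ω : (Fin n → ℝ) → Fin n → ℝ}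
    (hω : ContDiffOn ℝ (⊤ : ℕ∞) ω U) {I : Set ℝ} (hI : IsOpen I) {γ : ℝ → Fin n → ℝ}
    (hγ : IsGeodesicOn U Γ I γ) {t : ℝ} (ht : t ∈ I) :
    HasDerivAt (fun s => ∑ k, ω (γ s) k * deriv (fun u => γ u k) s)
      (covDeriv Γ ω (γ t) (fun k => deriv (fun u => γ u k) t)
        (fun k => deriv (fun u => γ u k) t)) t := by
  obtain ⟨hmem, hsm, hgeo⟩ := hγ
  have hIt := hI.mem_nhds ht
  have hγ' : HasDerivAt γ (fun k => deriv (fun u => γ u k) t) t := hasDerivAt_pi.2 fun k =>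
    (((hsm.coord k).differentiableOn (by norm_num)).differentiableAt hIt).hasDerivAt
  unfold covDeriv
  refine HasDerivAt.fun_sum fun k _ => ?_
  have h1 : HasDerivAt (fun s => ω (γ s) k) _ t :=
    (((hω.coord k).differentiableOn (by simp)).differentiableAt
      (hU.mem_nhds (hmem t ht))).hasFDerivAt.comp_hasDerivAt t hγ'
  have h2 : HasDerivAt (fun s => deriv (fun u => γ u k) s) _ t :=
    (((((contDiffOn_succ_iff_deriv_of_isOpen (n := 1) hI).1 (hsm.coord k)).2.2).differentiableOn
      (by norm_num)).differentiableAt hIt).hasDerivAt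
  refine (h1.mul h2).congr_deriv ?_
  change _ + _ * deriv (fun s => deriv (fun u => γ u k) s) t = _
  rw [eq_neg_of_add_eq_zero_left (hgeo t ht k)]
  ring

/-- A solution of a homogeneous scalar linear differential equation on an interval which vanishes
at `0` vanishes identically. -/
theorem eq_zero_of_hasDerivAt_mul {I : Set ℝ} (hI : IsOpen I) (hI' : I.OrdConnected)
    (h0 : (0 : ℝ) ∈ I) {f g : ℝ → ℝ} (hg : ContinuousOn g I)
    (hf : ∀ t ∈ I, HasDerivAt f (g t * f t) t) (hf0 : f 0 = 0) : ∀ t ∈ I, f t = 0 := by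
  have hG : ∀ t ∈ I, HasDerivAt (fun u => ∫ s in (0 : ℝ)..u, g s) (g t) t := fun t ht =>
    intervalIntegral.integral_hasDerivAt_right
      ((hg.mono (hI'.uIcc_subset h0 ht)).intervalIntegrable)
      (hg.stronglyMeasurableAtFilter hI t ht) (hg.continuousAt (hI.mem_nhds ht))
  have hh : ∀ t ∈ I, HasDerivAt (fun u => f u * Real.exp (-∫ s in (0 : ℝ)..u, g s)) 0 t :=
    fun t ht => ((hf t ht).mul (hG t ht).neg.exp).congr_deriv (by ring)
  intro t ht
  have := hI.is_const_of_deriv_eq_zero hI'.isPreconnected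
    (fun s hs => (hh s hs).differentiableAt.differentiableWithinAt)
    (fun s hs => (hh s hs).deriv) ht h0
  simpa [hf0, Real.exp_ne_zero] using this

/-- A geodesic with prescribed initial position and velocity exists for a short time. -/
theorem exists_isGeodesicOn {n : ℕ} {U : Set (Fin n → ℝ)} (hU : IsOpen U)
    {Γ : Fin n → Fin n → Fin n → (Fin n → ℝ) → ℝ}
    (hΓ : ∀ k i j, ContDiffOn ℝ (⊤ : ℕ∞) (Γ k i j) U)
    {x : Fin n → ℝ} (hx : x ∈ U) (v : Fin n → ℝ) :
    ∃ I : Set ℝ, IsOpen I ∧ I.OrdConnected ∧ (0 : ℝ) ∈ I ∧ ∃ γ : ℝ → Fin n → ℝ,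
      IsGeodesicOn U Γ I γ ∧ γ 0 = x ∧ ∀ k, deriv (fun u => γ u k) 0 = v k := by
  let F : (Fin n → ℝ) × (Fin n → ℝ) → (Fin n → ℝ) × (Fin n → ℝ) :=
    fun p => (p.2, fun k => -∑ i, ∑ j, Γ k i j p.1 * p.2 i * p.2 j)
  have hF : ∀ p : (Fin n → ℝ) × (Fin n → ℝ), p.1 ∈ U → ContDiffAt ℝ 1 F p := fun p hp => by
    have hΓp : ∀ k i j, ContDiffAt ℝ 1 (fun q : (Fin n → ℝ) × (Fin n → ℝ) => Γ k i j q.1) p :=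
      fun k i j => (((hΓ k i j).contDiffAt (hU.mem_nhds hp)).of_le (by simp)).comp p contDiffAt_fst
    have hc : ∀ i, ContDiffAt ℝ 1 (fun q : (Fin n → ℝ) × (Fin n → ℝ) => q.2 i) p :=
      fun i => contDiffAt_pi.1 contDiffAt_snd i
    refine contDiffAt_snd.prodMk (contDiffAt_pi.2 fun k => ContDiffAt.neg ?_)
    exact ContDiffAt.sum fun i _ => ContDiffAt.sum fun j _ => ((hΓp k i j).mul (hc i)).mul (hc j)
  obtain ⟨α, hα0, ε, hε, hα⟩ :=
    (hF (x, v) hx).exists_forall_mem_closedBall_exists_eq_forall_mem_Ioo_hasDerivAt₀ 0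
  have hα1 : ContinuousAt (fun t => (α t).1) 0 :=
    continuousAt_fst.comp (hα 0 ⟨by linarith, by linarith⟩).continuousAt
  obtain ⟨δ, hδ, hδU⟩ := Metric.mem_nhds_iff.1
    (hα1.preimage_mem_nhds (hU.mem_nhds (show (α 0).1 ∈ U by rw [hα0]; exact hx)))
  have hsub : ∀ t ∈ Metric.ball (0 : ℝ) (min δ ε), (α t).1 ∈ U ∧ HasDerivAt α (F (α t)) t :=
    fun t ht => by
      rw [Metric.mem_ball, lt_min_iff] at ht
      refine ⟨hδU ht.1, hα t ?_⟩
      rw [← Real.ball_eq_Ioo]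
      exact ht.2
  have h0 : (0 : ℝ) ∈ Metric.ball (0 : ℝ) (min δ ε) := Metric.mem_ball_self (lt_min hδ hε)
  have hd1 : ∀ t ∈ Metric.ball (0 : ℝ) (min δ ε), HasDerivAt (fun s => (α s).1) (α t).2 t :=
    fun t ht => (hsub t ht).2.fst
  have hd1k : ∀ t ∈ Metric.ball (0 : ℝ) (min δ ε), ∀ k,
      deriv (fun s => (α s).1 k) t = (α t).2 k :=
    fun t ht k => (hasDerivAt_pi.1 (hd1 t ht) k).deriv
  have hd2 : ∀ t ∈ Metric.ball (0 : ℝ) (min δ ε),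
      HasDerivAt (fun s => (α s).2) (F (α t)).2 t :=
    fun t ht => (hsub t ht).2.snd
  refine ⟨Metric.ball 0 (min δ ε), Metric.isOpen_ball, (convex_ball _ _).ordConnected, h0,
    fun t => (α t).1, ⟨fun t ht => (hsub t ht).1, ?_, ?_⟩, by simp [hα0],
    fun k => by rw [hd1k 0 h0 k, hα0]⟩
  · refine (contDiffOn_succ_iff_deriv_of_isOpen (n := 1) Metric.isOpen_ball).2
      ⟨fun t ht => (hd1 t ht).differentiableAt.differentiableWithinAt, by simp, ?_⟩
    refine ContDiffOn.congr (f := fun t => (α t).2) ?_ fun t ht => (hd1 t ht).deriv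
    refine (contDiffOn_succ_iff_deriv_of_isOpen (n := 0) Metric.isOpen_ball).2
      ⟨fun t ht => (hd2 t ht).differentiableAt.differentiableWithinAt, by simp, ?_⟩
    refine contDiffOn_zero.2 (ContinuousOn.congr (f := fun t => (F (α t)).2) (fun t ht => ?_)
      fun t ht => (hd2 t ht).deriv)
    exact (continuousAt_snd.comp (ContinuousAt.comp (hF _ (hsub t ht).1).continuousAt
      (hsub t ht).2.continuousAt)).continuousWithinAt
  · intro t ht k
    have hev : (fun s => deriv (fun u => (α u).1 k) s) =ᶠ[nhds t] fun s => (α s).2 k :=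
      Filter.eventuallyEq_of_mem (Metric.isOpen_ball.mem_nhds ht) fun s hs => hd1k s hs k
    rw [hev.deriv_eq, (hasDerivAt_pi.1 (hd2 t ht) k).deriv]
    simp only [hd1k t ht, F, neg_add_cancel]

/-- A foliation is totally geodesic iff `(∇_v ω)(v) = 0` for all `v` tangent to it. -/
theorem totallyGeodesic_iff_covDeriv {n : ℕ} {U : Set (Fin n → ℝ)} (hU : IsOpen U)
    {Γ : Fin n → Fin n → Fin n → (Fin n → ℝ) → ℝ}
    (hΓ : ∀ k i j, ContDiffOn ℝ (⊤ : ℕ∞) (Γ k i j) U) {ω : (Fin n → ℝ) → Fin n → ℝ}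
    (hω : ContDiffOn ℝ (⊤ : ℕ∞) ω U) (hω0 : ∀ x ∈ U, ω x ≠ 0) :
    TotallyGeodesic U Γ ω ↔ ∀ x ∈ U, ∀ v : Fin n → ℝ, ∑ k, ω x k * v k = 0 →
      covDeriv Γ ω x v v = 0 := by
  constructor
  · intro h x hx v hv
    obtain ⟨I, hI, hI', h0, γ, hγ, hγ0, hγv⟩ := exists_isGeodesicOn hU hΓ hx v
    have hd := hγ.hasDerivAt_form hU hω hI h0
    have hz := h I hI hI' h0 γ hγ (by simpa only [hγ0, hγv] using hv)
    have hev : (fun s => ∑ k, ω (γ s) k * deriv (fun u => γ u k) s) =ᶠ[nhds 0] fun _ => 0 :=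
      Filter.eventuallyEq_of_mem (hI.mem_nhds h0) hz
    have := hd.unique ((hasDerivAt_const (0 : ℝ) (0 : ℝ)).congr_of_eventuallyEq hev)
    simpa only [hγ0, hγv] using this
  · intro h I hI hI' h0 γ hγ hv
    have hcγ : ContinuousOn γ I := hγ.2.1.continuousOn
    have hcd : ∀ k, ContinuousOn (fun t => deriv (fun u => γ u k) t) I := fun k =>
      (hγ.2.1.coord k).continuousOn_deriv_of_isOpen hI (by norm_num)
    have hcω : ∀ k, ContinuousOn (fun t => ω (γ t) k) I := fun k =>
      (hω.coord k).continuousOn.comp hcγ hγ.1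
    have hcΓ : ∀ k i j, ContinuousOn (fun t => Γ k i j (γ t)) I := fun k i j =>
      (hΓ k i j).continuousOn.comp hcγ hγ.1
    have hcf : ∀ k, ContinuousOn (fun t => fderiv ℝ (fun y => ω y k) (γ t)) I := fun k =>
      ((hω.coord k).continuousOn_fderiv_of_isOpen hU (by simp)).comp hcγ hγ.1
    have hcov : ∀ a b : ℝ → Fin n → ℝ, (∀ k, ContinuousOn (fun t => a t k) I) →
        (∀ k, ContinuousOn (fun t => b t k) I) →
        ContinuousOn (fun t => covDeriv Γ ω (γ t) (a t) (b t)) I := fun a b ha hb =>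
      continuousOn_finsetSum _ fun k _ =>
        (((hcf k).clm_apply (continuousOn_pi.2 ha)).mul (hb k)).sub <|
          (hcω k).mul <| continuousOn_finsetSum _ fun i _ => continuousOn_finsetSum _ fun j _ =>
            ((hcΓ k i j).mul (ha i)).mul (hb j)
    have hN : ContinuousOn (fun t => ∑ k, ω (γ t) k * ω (γ t) k) I :=
      continuousOn_finsetSum _ fun k _ => (hcω k).mul (hcω k)
    have hN0 : ∀ t ∈ I, ∑ k, ω (γ t) k * ω (γ t) k ≠ 0 := fun t ht =>
      sum_mul_self_ne_zero (hω0 _ (hγ.1 t ht))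
    have hS : ContinuousOn (fun t => ∑ k, ω (γ t) k * deriv (fun u => γ u k) t) I :=
      continuousOn_finsetSum _ fun k _ => (hcω k).mul (hcd k)
    refine eq_zero_of_hasDerivAt_mul hI hI' h0
      ((((hcov _ _ hcd hcω).add (hcov _ _ hcω hcd)).sub
        ((hS.div hN hN0).mul (hcov _ _ hcω hcω))).div hN hN0) (fun t ht => ?_) hv
    have hd := hγ.hasDerivAt_form hU hω hI ht
    rw [covDeriv_self_eq_mul (hω0 _ (hγ.1 t ht)) (h _ (hγ.1 t ht))] at hd
    exact hd

/-- Transformation of the symmetric covariant differential under a projective change. -/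
theorem dsym_eq_of_proj {n : ℕ} {Γ Γ' : Fin n → Fin n → Fin n → (Fin n → ℝ) → ℝ}
    {ρ : (Fin n → ℝ) → Fin n → ℝ} {x : Fin n → ℝ}
    (h : ∀ k i j, Γ' k i j x =
      Γ k i j x + (if k = i then ρ x j else 0) + (if k = j then ρ x i else 0))
    (ω : (Fin n → ℝ) → Fin n → ℝ) (i j : Fin n) :
    dsym Γ' ω i j x = dsym Γ ω i j x - 2 * symProd ρ ω i j x := by
  unfold dsym symProd
  simp only [h, add_mul, ite_mul, zero_mul, Finset.sum_add_distrib, Finset.sum_ite_eq',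
    Finset.mem_univ, if_true]
  ring

/-- projectively equivalent torsion-free connections have the same totally
geodesic codimension-one foliations; moreover if `Γ'ᵏᵢⱼ = Γᵏᵢⱼ + δᵏᵢρⱼ + δᵏⱼρᵢ`, then
`d^s_{Γ'} ω = d^s_Γ ω − 2ρ·ω` for every smooth 1-form `ω`. -/
theorem statement3 {n : ℕ} (hn : 2 ≤ n) (U : Set (Fin n → ℝ)) (hU : IsOpen U)
    (hUconn : IsConnected U)
    (Γ Γ' : Fin n → Fin n → Fin n → (Fin n → ℝ) → ℝ)
    (hΓ : IsTorsionFreeConn U Γ) (hΓ' : IsTorsionFreeConn U Γ')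
    (hpe : ProjEquiv U Γ Γ') :
    (∀ ω : (Fin n → ℝ) → Fin n → ℝ, IsFoliationForm U ω →
      (TotallyGeodesic U Γ ω ↔ TotallyGeodesic U Γ' ω)) ∧
    (∀ ρ : (Fin n → ℝ) → Fin n → ℝ,
      (∀ x ∈ U, ∀ k i j, Γ' k i j x =
        Γ k i j x + (if k = i then ρ x j else 0) + (if k = j then ρ x i else 0)) →
      ∀ ω : (Fin n → ℝ) → Fin n → ℝ, ContDiffOn ℝ (⊤ : ℕ∞) ω U →
        ∀ x ∈ U, ∀ i j, dsym Γ' ω i j x = dsym Γ ω i j x - 2 * symProd ρ ω i j x) := by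
  refine ⟨fun ω hω => ?_, fun ρ hρ ω _ x hx i j => dsym_eq_of_proj (hρ x hx) ω i j⟩
  obtain ⟨ρ, -, hρ⟩ := hpe
  rw [totallyGeodesic_iff_covDeriv hU hΓ.1 hω.1 hω.2.1,
    totallyGeodesic_iff_covDeriv hU hΓ'.1 hω.1 hω.2.1]
  refine forall₂_congr fun x hx => forall₂_congr fun v hv => ?_
  rw [covDeriv_self_eq_of_proj (hρ x hx) hv]
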